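/- Let G = (V,E) be an undirected graph with edge weights w : E → ℤ⁺ such that D(v) = Σ_{e incident to v} w(e) is even for every v ∈ V. Let H be the red-blue bipartite graph with capacities defined as follows: for each v ∈ V there is a red vertex v with capacity 1 + D(v)/2 and a private blue neighbor v' of degree one adjacent only to v; for each edge e = {v,u} ∈ E with w(e) = α there are blue vertices y_{e,1},…,y_{e,α}, z'_e, y'_{e,1},…,y'_{e,α} and red vertices z_e, z''_e, where each y_{e,i} is adjacent to v and to z_e, the vertex z'_e is adjacent to z_e and to z''_e, and each y'_{e,i} is adjacent to z''_e and to u; the capacities of z_e and z''_e equal their degrees, namely α + 1. Then H has a capacitated red-blue dominating set of size at most |V| + |E| if and only if G has a circulating orientation. -/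

import Mathlib

/-! The dominating set `S` must contain every red `v` (private neighbors) and, for each edge `e`,
at least one of `z_e`, `z''_e` (to cover `z'_e`). As `|S| ≤ |V| + |E|`, it contains exactly one of
them. Orient `e` out of the endpoint whose side of the gadget has its `z`-vertex missing from `S`:
all `w(e)` blue vertices on that side have to be assigned to that endpoint. Hence the load of `v`
is at least `1 + out(v)`, and the capacity gives `out(v) ≤ D(v)/2`. Summed over `v`, both sides
equal `∑_e w(e)`, so `out(v) = D(v)/2` for every `v`. Conversely, a circulating orientation
prescribes which `z`-vertex to take, and the resulting load of `v` is exactly `1 + out(v)`.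

The translation between sums over neighborhoods and sums over edges is `sum_neighbor_eq_sum_edge`;
the load of a vertex is computed in `ncard_fiber_eq`. -/

section

variable {V : Type*} [Fintype V] [LinearOrder V] (G : SimpleGraph V) [DecidableRel G.Adj]
  (w : Sym2 V → ℕ)

/-- The edges of `G`, each represented once by its ordered pair of endpoints. -/
abbrev OrdEdge : Type _ := {p : V × V // G.Adj p.1 p.2 ∧ p.1 < p.2}

/-- The weight of an edge. -/
def edgeWeight (e : OrdEdge G) : ℕ := w s(e.val.1, e.val.2)

/-- The weighted degree `D(v)` of a vertex of `G`. -/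
def wDeg (v : V) : ℕ := ∑ u ∈ G.neighborFinset v, w s(v, u)

/-- Red vertices of `H`: a red vertex for each `v ∈ V`, and the red vertices
`z_e = (e, false)` and `z''_e = (e, true)` for each edge `e`. -/
abbrev RedVert : Type _ := V ⊕ (OrdEdge G × Bool)

/-- Blue vertices of `H`: a private blue neighbor `v'` for each `v ∈ V`, and for each
edge `e = {v,u}` (ordered as `v < u`) with weight `α` the blue vertices
`y_{e,1},…,y_{e,α}` (first summand), `z'_e` (middle summand) and `y'_{e,1},…,y'_{e,α}`
(last summand). -/
abbrev BlueVert : Type _ := V ⊕ (Σ e : OrdEdge G, (Fin (edgeWeight G w e) ⊕ (Unit ⊕ Fin (edgeWeight G w e))))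

/-- The red-blue adjacency of `H`: each `v` is adjacent to its private neighbor `v'`;
for each edge `e = {v,u}`, each `y_{e,i}` is adjacent to `v` and `z_e`, the vertex
`z'_e` is adjacent to `z_e` and `z''_e`, and each `y'_{e,i}` is adjacent to `z''_e`
and `u`. -/
def rbAdj : RedVert G → BlueVert G w → Prop
  | Sum.inl v, Sum.inl u => v = u
  | Sum.inl v, Sum.inr ⟨e, Sum.inl _⟩ => v = e.val.1
  | Sum.inl v, Sum.inr ⟨e, Sum.inr (Sum.inr _)⟩ => v = e.val.2
  | Sum.inr (e, false), Sum.inr ⟨e', Sum.inl _⟩ => e = e'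
  | Sum.inr (e, false), Sum.inr ⟨e', Sum.inr (Sum.inl _)⟩ => e = e'
  | Sum.inr (e, true), Sum.inr ⟨e', Sum.inr (Sum.inl _)⟩ => e = e'
  | Sum.inr (e, true), Sum.inr ⟨e', Sum.inr (Sum.inr _)⟩ => e = e'
  | _, _ => False

/-- The capacities of the red vertices: `c(v) = 1 + D(v)/2`, and the capacities of
`z_e` and `z''_e` equal their degree `w(e) + 1`. -/
def rbCap : RedVert G → ℕ
  | Sum.inl v => 1 + wDeg G w v / 2
  | Sum.inr (e, _) => edgeWeight G w e + 1

/-! ### Sums over edges -/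

/-- A sum over the neighbors of `v`, read off edge by edge: the edge `e` contributes when `v` is
its smaller or its larger endpoint. -/
lemma sum_neighbor_eq_sum_edge (F : V → V → ℕ) (v : V) :
    ∑ u ∈ G.neighborFinset v, F v u =
      ∑ e : OrdEdge G, ((if e.val.1 = v then F e.val.1 e.val.2 else 0) +
        (if e.val.2 = v then F e.val.2 e.val.1 else 0)) := by
  have key : ∑ e : OrdEdge G, ((if e.val.1 = v then F e.val.1 e.val.2 else 0) +
        (if e.val.2 = v then F e.val.2 e.val.1 else 0)) =
      ∑ p : V × V, if G.Adj p.1 p.2 ∧ p.1 < p.2 then ((if p.1 = v then F p.1 p.2 else 0) +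
        (if p.2 = v then F p.2 p.1 else 0)) else 0 := by
    rw [← Finset.sum_filter]
    exact (Finset.sum_subtype (p := fun p : V × V => G.Adj p.1 p.2 ∧ p.1 < p.2) _ (by simp)
      (fun p : V × V => (if p.1 = v then F p.1 p.2 else 0) +
        (if p.2 = v then F p.2 p.1 else 0))).symm
  have split : ∀ p : V × V, (if G.Adj p.1 p.2 ∧ p.1 < p.2 then
        ((if p.1 = v then F p.1 p.2 else 0) + (if p.2 = v then F p.2 p.1 else 0)) else 0) =
      (if p.1 = v then (if G.Adj v p.2 ∧ v < p.2 then F v p.2 else 0) else 0) +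
      (if p.2 = v then (if G.Adj v p.1 ∧ p.1 < v then F v p.1 else 0) else 0) := by
    rintro ⟨a, b⟩
    have := G.adj_comm a b
    grind
  rw [key, Finset.sum_congr rfl (fun p _ => split p), Finset.sum_add_distrib,
    Fintype.sum_prod_type, Fintype.sum_prod_type_right]
  simp only [Finset.sum_ite_irrel, Finset.sum_const_zero, Finset.sum_ite_eq', Finset.mem_univ,
    if_true]
  rw [← Finset.sum_add_distrib, SimpleGraph.neighborFinset_eq_filter, Finset.sum_filter]
  refine Finset.sum_congr rfl fun u _ => ?_
  by_cases h : G.Adj v u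
  · rcases lt_or_gt_of_ne h.ne with h1 | h1
    · simp [h, h1, h1.not_gt]
    · simp [h, h1, h1.not_gt]
  · simp [h]

lemma sum_sum_neighbor_eq_sum_edge (F : V → V → ℕ) :
    ∑ v, ∑ u ∈ G.neighborFinset v, F v u =
      ∑ e : OrdEdge G, (F e.val.1 e.val.2 + F e.val.2 e.val.1) := by
  simp_rw [sum_neighbor_eq_sum_edge]
  rw [Finset.sum_comm]
  simp [Finset.sum_add_distrib]

/-- Handshake lemma: each side, doubled, is the sum of the degrees. -/
lemma card_ordEdge : Fintype.card (OrdEdge G) = G.edgeFinset.card := by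
  have h1 := sum_sum_neighbor_eq_sum_edge G (fun _ _ => 1)
  have h2 := G.sum_degrees_eq_twice_card_edges
  simp at h1
  omega

/-! ### Loads of red vertices -/

/-- The load of the red vertex `v` under an assignment `f` along edges of `H`: its private
neighbor, plus those `y`-vertices of incident edges that are assigned to `v`. -/
lemma ncard_fiber_eq (f : BlueVert G w → RedVert G) (hf : ∀ b, rbAdj G w (f b) b) (v : V) :
    {b | f b = Sum.inl v}.ncard = 1 + ∑ e : OrdEdge G,
      ((if e.val.1 = v then
          ∑ i, (if f (Sum.inr ⟨e, Sum.inl i⟩) = Sum.inl e.val.1 then 1 else 0) else 0) +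
        (if e.val.2 = v then
          ∑ i, (if f (Sum.inr ⟨e, Sum.inr (Sum.inr i)⟩) = Sum.inl e.val.2 then 1 else 0)
          else 0)) := by
  have hcard : {b | f b = Sum.inl v}.ncard = ∑ b, if f b = Sum.inl v then 1 else 0 := by
    rw [Set.ncard_eq_toFinset_card', ← Finset.card_filter]
    congr 1
    ext b
    simp
  rw [hcard, Fintype.sum_sum_type, Fintype.sum_sigma]
  congr 1
  · have : ∀ u : V, f (Sum.inl u) = Sum.inl u := by
      intro u
      have := hf (Sum.inl u)
      rcases h : f (Sum.inl u) with x | ⟨e, _ | _⟩ <;> simp_all [rbAdj]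
    simp [this]
  · refine Finset.sum_congr rfl fun e _ => ?_
    rw [Fintype.sum_sum_type, Fintype.sum_sum_type]
    have hz : f (Sum.inr ⟨e, Sum.inr (Sum.inl ())⟩) ≠ Sum.inl v := by
      intro h
      have := hf (Sum.inr ⟨e, Sum.inr (Sum.inl ())⟩)
      simp [h, rbAdj] at this
    have hy : ∀ i, f (Sum.inr ⟨e, Sum.inl i⟩) = Sum.inl v → e.val.1 = v := by
      intro i h
      have := hf (Sum.inr ⟨e, Sum.inl i⟩)
      rw [h] at this
      exact this.symm
    have hy' : ∀ i, f (Sum.inr ⟨e, Sum.inr (Sum.inr i)⟩) = Sum.inl v → e.val.2 = v := by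
      intro i h
      have := hf (Sum.inr ⟨e, Sum.inr (Sum.inr i)⟩)
      rw [h] at this
      exact this.symm
    simp only [Finset.univ_unique, PUnit.default_eq_unit, Finset.sum_singleton, hz, if_false,
      zero_add]
    congr 1
    · split_ifs with h
      · rw [h]
      · exact Finset.sum_eq_zero fun i _ => if_neg fun h' => h (hy i h')
    · split_ifs with h
      · rw [h]
      · exact Finset.sum_eq_zero fun i _ => if_neg fun h' => h (hy' i h')

/-! ### Out-weights -/

/-- The weight leaving `v` under `σ`. -/
def outWeight (σ : V → V → Bool) (v : V) : ℕ :=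
  ∑ u ∈ G.neighborFinset v, (if σ v u then w s(v, u) else 0)

lemma outWeight_add_in (σ : V → V → Bool) (v : V) :
    outWeight G w σ v + ∑ u ∈ G.neighborFinset v, (if σ v u then 0 else w s(v, u)) =
      wDeg G w v := by
  rw [outWeight, wDeg, ← Finset.sum_add_distrib]
  refine Finset.sum_congr rfl fun u _ => ?_
  split_ifs <;> simp

lemma outWeight_eq_sum_edge (σ : V → V → Bool) (v : V) :
    outWeight G w σ v = ∑ e : OrdEdge G,
      ((if e.val.1 = v then (if σ e.val.1 e.val.2 then edgeWeight G w e else 0) else 0) +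
        (if e.val.2 = v then (if σ e.val.2 e.val.1 then edgeWeight G w e else 0) else 0)) := by
  rw [outWeight, sum_neighbor_eq_sum_edge G (fun v u => if σ v u then w s(v, u) else 0)]
  simp only [edgeWeight, Sym2.eq_swap]

/-- An orientation in which no vertex sends out more than half its weighted degree is balanced:
the out-weights and the halves `D(v)/2` have the same total, the total edge weight. -/
lemma two_mul_outWeight_eq (σ : V → V → Bool) (hσ : ∀ u v, G.Adj u v → σ u v = ! σ v u)
    (hle : ∀ v, 2 * outWeight G w σ v ≤ wDeg G w v) (v : V) :
    2 * outWeight G w σ v = wDeg G w v := by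
  have htot : ∑ v, 2 * outWeight G w σ v = ∑ v, wDeg G w v := by
    rw [← Finset.mul_sum]
    simp only [outWeight, wDeg]
    rw [sum_sum_neighbor_eq_sum_edge G (fun v u => if σ v u then w s(v, u) else 0),
      sum_sum_neighbor_eq_sum_edge G (fun v u => w s(v, u)), Finset.mul_sum]
    refine Finset.sum_congr rfl fun e _ => ?_
    rw [hσ _ _ e.2.1, Sym2.eq_swap (a := e.val.2)]
    cases σ e.val.2 e.val.1 <;> simp <;> omega
  exact (Finset.sum_eq_sum_iff_of_le fun v _ => hle v).1 htot v (Finset.mem_univ v)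

/-! ### From dominating sets to orientations -/

/-- A dominating set of size at most `|V| + |E|` does not contain both `z_e` and `z''_e`. -/
lemma not_mem_of_mem (S : Set (RedVert G)) (f : BlueVert G w → RedVert G)
    (hcard : S.ncard ≤ Fintype.card V + G.edgeFinset.card)
    (hf : ∀ b, f b ∈ S ∧ rbAdj G w (f b) b) (e : OrdEdge G)
    (h0 : (Sum.inr (e, false) : RedVert G) ∈ S) : (Sum.inr (e, true) : RedVert G) ∉ S := by
  have hz : ∀ e : OrdEdge G, ∃ c : Bool, f (Sum.inr ⟨e, Sum.inr (Sum.inl ())⟩) =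
      Sum.inr (e, c) := by
    intro e
    have h2 := (hf (Sum.inr ⟨e, Sum.inr (Sum.inl ())⟩)).2
    rcases h : f (Sum.inr ⟨e, Sum.inr (Sum.inl ())⟩) with x | ⟨e', c⟩ <;> rw [h] at h2
    · exact h2.elim
    · cases c <;> simp only [rbAdj] at h2 <;> rw [h2] <;> exact ⟨_, rfl⟩
  have hv : ∀ u : V, f (Sum.inl u) = Sum.inl u := by
    intro u
    have h2 := (hf (Sum.inl u)).2
    rcases h : f (Sum.inl u) with x | ⟨e, _ | _⟩ <;> rw [h] at h2 <;> simp only [rbAdj] at h2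
    rw [h2]
  choose c hc using hz
  -- The forced vertices already number `|V| + |E|`, so they make up all of `S`.
  let g : V ⊕ OrdEdge G → RedVert G := Sum.elim Sum.inl (fun e => Sum.inr (e, c e))
  have hg : Function.Injective g := by
    rintro (a | a) (b | b) h
    · exact congrArg Sum.inl (Sum.inl.inj h)
    · exact (Sum.inl_ne_inr h).elim
    · exact (Sum.inr_ne_inl h).elim
    · exact congrArg Sum.inr (congrArg Prod.fst (Sum.inr.inj h))
  have hsub : Set.range g ⊆ S := by
    rintro _ ⟨a | a, rfl⟩
    · have := (hf (Sum.inl a)).1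
      rwa [hv] at this
    · have := (hf (Sum.inr ⟨a, Sum.inr (Sum.inl ())⟩)).1
      rwa [hc] at this
  have hncard : (Set.range g).ncard = Fintype.card V + G.edgeFinset.card := by
    rw [← Set.image_univ, Set.ncard_image_of_injective _ hg, Set.ncard_univ,
      Nat.card_eq_fintype_card, Fintype.card_sum, card_ordEdge]
  have hS : Set.range g = S :=
    Set.eq_of_subset_of_ncard_le hsub (by omega) (Set.toFinite S)
  intro h1
  rw [← hS] at h0 h1
  obtain ⟨a | a, ha⟩ := h0
  · exact Sum.inl_ne_inr ha
  obtain ⟨b | b, hb⟩ := h1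
  · exact Sum.inl_ne_inr hb
  obtain ⟨ha1, ha2⟩ := Prod.mk.inj (Sum.inr.inj ha)
  obtain ⟨hb1, hb2⟩ := Prod.mk.inj (Sum.inr.inj hb)
  rw [ha1] at ha2
  rw [hb1, ha2] at hb2
  exact Bool.false_ne_true hb2

/-- From a dominating set to an orientation: the weight leaving `v` is a lower bound for the load
of `v` beyond its private neighbor, so the capacity bounds it by `D(v)/2`. -/
theorem exists_orientation_of_dominating (heven : ∀ v : V, Even (wDeg G w v))
    (S : Set (RedVert G)) (f : BlueVert G w → RedVert G)
    (hcard : S.ncard ≤ Fintype.card V + G.edgeFinset.card)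
    (hf : ∀ b, f b ∈ S ∧ rbAdj G w (f b) b)
    (hcap : ∀ v ∈ S, {b | f b = v}.ncard ≤ rbCap G w v) :
    ∃ σ : V → V → Bool, (∀ u v, G.Adj u v → σ u v = ! σ v u) ∧
      ∀ v, 2 * outWeight G w σ v = wDeg G w v := by
  classical
  -- The endpoint whose `z`-vertex is missing from `S` is the tail.
  let σ : V → V → Bool := fun v u =>
    if v < u then decide (¬ ∃ h, (Sum.inr (⟨(v, u), h⟩, false) : RedVert G) ∈ S)
    else decide (∃ h, (Sum.inr (⟨(u, v), h⟩, false) : RedVert G) ∈ S)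
  have hσ1 : ∀ e : OrdEdge G, σ e.val.1 e.val.2 = true ↔
      (Sum.inr (e, false) : RedVert G) ∉ S := by
    rintro ⟨⟨a, b⟩, h, hlt⟩
    simp only at h hlt
    simp [σ, h, hlt]
  have hσ2 : ∀ e : OrdEdge G, σ e.val.2 e.val.1 = true ↔
      (Sum.inr (e, false) : RedVert G) ∈ S := by
    rintro ⟨⟨a, b⟩, h, hlt⟩
    simp only at h hlt
    simp [σ, h, hlt, hlt.not_gt]
  have hσ : ∀ u v, G.Adj u v → σ u v = ! σ v u := by
    intro u v h
    rcases lt_or_gt_of_ne h.ne with hlt | hlt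
    · have h1 := hσ1 ⟨(u, v), h, hlt⟩
      have h2 := hσ2 ⟨(u, v), h, hlt⟩
      grind
    · have h1 := hσ1 ⟨(v, u), h.symm, hlt⟩
      have h2 := hσ2 ⟨(v, u), h.symm, hlt⟩
      grind
  refine ⟨σ, hσ, two_mul_outWeight_eq G w σ hσ fun v => ?_⟩
  have hvS : (Sum.inl v : RedVert G) ∈ S := by
    obtain ⟨h1, h2⟩ := hf (Sum.inl v)
    rcases h : f (Sum.inl v) with x | ⟨e, _ | _⟩ <;> simp_all [rbAdj]
  have hload := hcap _ hvS
  rw [ncard_fiber_eq G w f (fun b => (hf b).2)] at hload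
  have hle : outWeight G w σ v ≤ ∑ e : OrdEdge G,
      ((if e.val.1 = v then
          ∑ i, (if f (Sum.inr ⟨e, Sum.inl i⟩) = Sum.inl e.val.1 then 1 else 0) else 0) +
        (if e.val.2 = v then
          ∑ i, (if f (Sum.inr ⟨e, Sum.inr (Sum.inr i)⟩) = Sum.inl e.val.2 then 1 else 0)
          else 0)) := by
    rw [outWeight_eq_sum_edge]
    refine Finset.sum_le_sum fun e _ => add_le_add ?_ ?_
    · split_ifs with h1 h2
      · have : ∀ i, f (Sum.inr ⟨e, Sum.inl i⟩) = Sum.inl e.val.1 := by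
          intro i
          have h3 := (hσ1 e).1 h2
          obtain ⟨h4, h5⟩ := hf (Sum.inr ⟨e, Sum.inl i⟩)
          rcases h : f (Sum.inr ⟨e, Sum.inl i⟩) with x | ⟨e', _ | _⟩ <;> rw [h] at h4 h5 <;>
            simp only [rbAdj] at h5
          · rw [h5]
          · exact absurd (h5 ▸ h4) h3
        simp [this]
      · exact Nat.zero_le _
      · exact le_rfl
    · split_ifs with h1 h2
      · have : ∀ i, f (Sum.inr ⟨e, Sum.inr (Sum.inr i)⟩) = Sum.inl e.val.2 := by
          intro i
          have h3 := not_mem_of_mem G w S f hcard hf e ((hσ2 e).1 h2)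
          obtain ⟨h4, h5⟩ := hf (Sum.inr ⟨e, Sum.inr (Sum.inr i)⟩)
          rcases h : f (Sum.inr ⟨e, Sum.inr (Sum.inr i)⟩) with x | ⟨e', _ | _⟩ <;>
            rw [h] at h4 h5 <;> simp only [rbAdj] at h5
          · rw [h5]
          · exact absurd (h5 ▸ h4) h3
        simp [this]
      · exact Nat.zero_le _
      · exact le_rfl
  have hev := (heven v).two_dvd
  simp only [rbCap] at hload
  omega

/-! ### From orientations to dominating sets -/

/-- The assignment prescribed by an orientation: for `e` directed out of its smaller endpoint,
the `y_{e,i}` go to that endpoint and everything else to `z''_e`; otherwise the `y'_{e,i}` go to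
the larger endpoint and everything else to `z_e`. -/
def orientAssign (σ : V → V → Bool) : BlueVert G w → RedVert G
  | Sum.inl v => Sum.inl v
  | Sum.inr ⟨e, Sum.inl _⟩ => if σ e.val.1 e.val.2 then Sum.inl e.val.1 else Sum.inr (e, false)
  | Sum.inr ⟨e, Sum.inr (Sum.inl _)⟩ => Sum.inr (e, σ e.val.1 e.val.2)
  | Sum.inr ⟨e, Sum.inr (Sum.inr _)⟩ =>
    if σ e.val.1 e.val.2 then Sum.inr (e, true) else Sum.inl e.val.2

theorem exists_dominating_of_orientation (σ : V → V → Bool)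
    (hσ : ∀ u v, G.Adj u v → σ u v = ! σ v u)
    (hout : ∀ v, 2 * outWeight G w σ v = wDeg G w v) :
    ∃ (S : Set (RedVert G)) (f : BlueVert G w → RedVert G),
        S.ncard ≤ Fintype.card V + G.edgeFinset.card ∧
        (∀ b, f b ∈ S ∧ rbAdj G w (f b) b) ∧
        (∀ v ∈ S, {b | f b = v}.ncard ≤ rbCap G w v) := by
  let g : V ⊕ OrdEdge G → RedVert G :=
    Sum.elim Sum.inl (fun e : OrdEdge G => Sum.inr (e, σ e.val.1 e.val.2))
  have hadj : ∀ b, rbAdj G w (orientAssign G w σ b) b := by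
    rintro (v | ⟨e, i | i | i⟩)
    · simp [orientAssign, rbAdj]
    all_goals cases h : σ e.val.1 e.val.2 <;> simp [orientAssign, rbAdj, h]
  refine ⟨Set.range g, orientAssign G w σ, ?_, fun b => ⟨?_, hadj b⟩, ?_⟩
  · rw [← card_ordEdge, ← Fintype.card_sum, ← Nat.card_eq_fintype_card, ← Set.ncard_univ,
      ← Set.image_univ]
    exact Set.ncard_image_le
  · rcases b with v | ⟨e, i | i | i⟩
    · exact ⟨Sum.inl v, rfl⟩
    · cases h : σ e.val.1 e.val.2
      · exact ⟨Sum.inr e, by simp [g, orientAssign, h]⟩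
      · exact ⟨Sum.inl e.val.1, by simp [g, orientAssign, h]⟩
    · exact ⟨Sum.inr e, by simp [g, orientAssign]⟩
    · cases h : σ e.val.1 e.val.2
      · exact ⟨Sum.inl e.val.2, by simp [g, orientAssign, h]⟩
      · exact ⟨Sum.inr e, by simp [g, orientAssign, h]⟩
  · rintro (v | ⟨e, c⟩) -
    · have hload : {b | orientAssign G w σ b = Sum.inl v}.ncard = 1 + outWeight G w σ v := by
        rw [ncard_fiber_eq G w _ hadj, outWeight_eq_sum_edge]
        congr 1
        refine Finset.sum_congr rfl fun e _ => ?_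
        rw [hσ _ _ e.2.1.symm]
        cases h : σ e.val.1 e.val.2 <;> simp [orientAssign, h]
      have := hout v
      simp only [rbCap]
      omega
    · -- The capacity of `z_e` and `z''_e` is their degree, so it never binds.
      let k : Unit ⊕ Fin (edgeWeight G w e) → BlueVert G w := fun x => Sum.inr ⟨e,
        Sum.elim (fun _ => Sum.inr (Sum.inl ()))
          (fun i => if c then Sum.inr (Sum.inr i) else Sum.inl i) x⟩
      have hsub : {b | orientAssign G w σ b = Sum.inr (e, c)} ⊆ k '' Set.univ := by
        intro b hb
        have hb' := hadj b
        rw [show orientAssign G w σ b = Sum.inr (e, c) from hb] at hb'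
        rcases b with v | ⟨e', i | i | i⟩ <;> cases c <;> simp only [rbAdj] at hb' <;> subst hb'
        · exact ⟨Sum.inr i, trivial, by simp [k]⟩
        · exact ⟨Sum.inl (), trivial, by simp [k]⟩
        · exact ⟨Sum.inl (), trivial, by simp [k]⟩
        · exact ⟨Sum.inr i, trivial, by simp [k]⟩
      calc _ ≤ (k '' Set.univ).ncard := Set.ncard_le_ncard hsub (Set.toFinite _)
        _ ≤ (Set.univ : Set (Unit ⊕ Fin (edgeWeight G w e))).ncard := Set.ncard_image_le
        _ = rbCap G w (Sum.inr (e, c)) := by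
          rw [Set.ncard_univ, Nat.card_eq_fintype_card]
          simp [rbCap, add_comm]

/-! ### The equivalence -/

/-- `H` has a capacitated red-blue dominating set of size at most `|V| + |E|` if and
only if `G` has a circulating orientation. -/
theorem capacitated_red_blue_dominating_set_iff_circulating_orientation
    (hw : ∀ e ∈ G.edgeSet, 0 < w e) (heven : ∀ v : V, Even (wDeg G w v)) :
    (∃ (S : Set (RedVert G)) (f : BlueVert G w → RedVert G),
        S.ncard ≤ Fintype.card V + G.edgeFinset.card ∧
        (∀ b, f b ∈ S ∧ rbAdj G w (f b) b) ∧
        (∀ v ∈ S, {b | f b = v}.ncard ≤ rbCap G w v)) ↔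
    (∃ σ : V → V → Bool,
      (∀ u v, G.Adj u v → σ u v = ! σ v u) ∧
      (∀ v : V,
        ∑ u ∈ G.neighborFinset v, (if σ v u then w s(v, u) else 0) =
        ∑ u ∈ G.neighborFinset v, (if σ v u then 0 else w s(v, u)))) := by
  have hbal : ∀ σ : V → V → Bool, (∀ v : V,
        ∑ u ∈ G.neighborFinset v, (if σ v u then w s(v, u) else 0) =
        ∑ u ∈ G.neighborFinset v, (if σ v u then 0 else w s(v, u))) ↔
      ∀ v, 2 * outWeight G w σ v = wDeg G w v := by
    intro σ
    refine forall_congr' fun v => ?_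
    have h := outWeight_add_in G w σ v
    rw [outWeight] at h ⊢
    omega
  simp only [hbal]
  constructor
  · rintro ⟨S, f, hcard, hf, hcap⟩
    exact exists_orientation_of_dominating G w heven S f hcard hf hcap
  · rintro ⟨σ, hσ, hout⟩
    exact exists_dominating_of_orientation G w σ hσ hout

end
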